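/- For all real numbers a, b with 1 <= a <= b there exists a real x with 0 < x <= 1 such that (1/x) * (1/(1 + x^b) - 1/(1 + x^a)) >= (1 - a/b) / (4*e). -/

import Mathlib

/-!
On `(0, 2]` the function `s ↦ 1 / s` decreases at rate at least `1 / 4`, and `c ↦ x ^ c` lies above
its tangent at `c = b`, whose slope is `x ^ b * log x`. Hence for `0 < x ≤ 1` the difference of the
two reciprocals is at least `(b - a) * (x ^ b * -log x) / 4`. The factor `x ^ b * -log x` is largest
at `x = exp (-1 / b)`, where it equals `1 / (b * e)`; the prefactor `1 / x ≥ 1` only helps.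
-/

lemma sub_div_sq_le_one_div_sub_one_div {K : Type*} [Field K] [LinearOrder K]
    [IsStrictOrderedRing K] {s t c : K} (hs : 0 < s) (hst : s ≤ t) (htc : t ≤ c) :
    (t - s) / c ^ 2 ≤ 1 / s - 1 / t := by
  have ht : 0 < t := hs.trans_le hst
  have hc : s * t ≤ c ^ 2 := by
    rw [sq]
    exact mul_le_mul (hst.trans htc) htc ht.le (ht.le.trans htc)
  rw [one_div, one_div, inv_sub_inv hs.ne' ht.ne']
  exact div_le_div_of_nonneg_left (sub_nonneg.2 hst) (mul_pos hs ht) hc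

lemma rpow_mul_log_mul_sub_le_rpow_sub_rpow {x : ℝ} (hx : 0 < x) (a b : ℝ) :
    x ^ b * Real.log x * (a - b) ≤ x ^ a - x ^ b := by
  have tangent : Real.log x * (a - b) + 1 ≤ x ^ (a - b) := by
    rw [Real.rpow_def_of_pos hx]
    exact Real.add_one_le_exp _
  calc x ^ b * Real.log x * (a - b)
      = x ^ b * (Real.log x * (a - b) + 1) - x ^ b := by ring
    _ ≤ x ^ b * x ^ (a - b) - x ^ b := by gcongr
    _ = x ^ a - x ^ b := by rw [← Real.rpow_add hx, add_sub_cancel]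

lemma sub_mul_rpow_mul_neg_log_div_four_le_one_div_sub_one_div {x a b : ℝ} (hx : 0 < x)
    (hx1 : x ≤ 1) (ha : 0 ≤ a) (hab : a ≤ b) :
    (b - a) * (x ^ b * -Real.log x) / 4 ≤ 1 / (1 + x ^ b) - 1 / (1 + x ^ a) := by
  have hba : x ^ b ≤ x ^ a := Real.rpow_le_rpow_of_exponent_ge hx hx1 hab
  have ha1 : x ^ a ≤ 1 := Real.rpow_le_one hx.le hx1 ha
  calc (b - a) * (x ^ b * -Real.log x) / 4
      = x ^ b * Real.log x * (a - b) / 4 := by ring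
    _ ≤ (x ^ a - x ^ b) / 4 := by
        gcongr
        exact rpow_mul_log_mul_sub_le_rpow_sub_rpow hx a b
    _ = (1 + x ^ a - (1 + x ^ b)) / 2 ^ 2 := by ring
    _ ≤ 1 / (1 + x ^ b) - 1 / (1 + x ^ a) :=
        sub_div_sq_le_one_div_sub_one_div (by positivity) (by linarith) (by linarith)

lemma exp_neg_one_div_rpow_mul_neg_log {b : ℝ} (hb : b ≠ 0) :
    Real.exp (-1 / b) ^ b * -Real.log (Real.exp (-1 / b)) = 1 / (b * Real.exp 1) := by
  rw [← Real.exp_mul, div_mul_cancel₀ _ hb, Real.log_exp, Real.exp_neg]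
  field_simp

theorem stmt_6_general {a b : ℝ} (ha : 0 ≤ a) (hb : 0 < b) (hab : a ≤ b) :
    ∃ x : ℝ, 0 < x ∧ x ≤ 1 ∧
      (1 - a / b) / (4 * Real.exp 1) ≤ (1 / x) * (1 / (1 + x ^ b) - 1 / (1 + x ^ a)) := by
  set x := Real.exp (-1 / b) with hx_def
  have hx : 0 < x := Real.exp_pos _
  have hx1 : x ≤ 1 := Real.exp_le_one_iff.2 (div_nonpos_of_nonpos_of_nonneg (by norm_num) hb.le)
  have value : (b - a) * (x ^ b * -Real.log x) / 4 = (1 - a / b) / (4 * Real.exp 1) := by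
    rw [hx_def, exp_neg_one_div_rpow_mul_neg_log hb.ne']
    field_simp
  have lower : (1 - a / b) / (4 * Real.exp 1) ≤ 1 / (1 + x ^ b) - 1 / (1 + x ^ a) :=
    value ▸ sub_mul_rpow_mul_neg_log_div_four_le_one_div_sub_one_div hx hx1 ha hab
  have nonneg : 0 ≤ (1 - a / b) / (4 * Real.exp 1) :=
    div_nonneg (sub_nonneg.2 (div_le_one_of_le₀ hab hb.le)) (by positivity)
  exact ⟨x, hx, hx1, lower.trans (le_mul_of_one_le_left (nonneg.trans lower)
    (one_le_one_div hx hx1))⟩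

/-- For `1 ≤ a ≤ b` there exists `0 < x ≤ 1` with
`(1/x) * (1/(1+x^b) - 1/(1+x^a)) ≥ (1 - a/b) / (4e)`. -/
theorem stmt_6 (a b : ℝ) (ha : 1 ≤ a) (hab : a ≤ b) :
    ∃ x : ℝ, 0 < x ∧ x ≤ 1 ∧
      (1 - a/b) / (4 * Real.exp 1) ≤ (1/x) * (1/(1 + x ^ b) - 1/(1 + x ^ a)) :=
  stmt_6_general (zero_le_one.trans ha) (zero_lt_one.trans_le (ha.trans hab)) hab
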